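/- arXiv:1606.05099 — 3 statements merged into one kernel-verified Lean document; each statement's English description precedes it below -/
import Mathlib

section
/- Let α ∈ ((√51 − 6)/3, (√129 − 9)/6] and let T_α be the 2-expansion map on [α, α+1]. Then T_α³(α) = T_α³(α + 1) = (4 − 10α)/(3α − 1). -/
/-- The `N`-expansion map for `N = 2`: `T_α(x) = 2/x - ⌊2/x - α⌋`. -/
noncomputable def Texp (α x : ℝ) : ℝ := 2 / x - ↑⌊2 / x - α⌋

theorem Texp_eq (α x y : ℝ) (n : ℤ) (h : 2 / x = y) (h1 : n ≤ y - α) (h2 : y - α < n + 1) :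
    Texp α x = y - n := by
  unfold Texp
  rw [h, Int.floor_eq_iff.mpr ⟨h1, h2⟩]

theorem stmt_4 (α : ℝ) (h₁ : (Real.sqrt 51 - 6) / 3 < α) (h₂ : α ≤ (Real.sqrt 129 - 9) / 6) :
    Texp α (Texp α (Texp α α)) = (4 - 10 * α) / (3 * α - 1) ∧
    Texp α (Texp α (Texp α (α + 1))) = (4 - 10 * α) / (3 * α - 1) := by
  have s1 : (7.14 : ℝ) < Real.sqrt 51 := Real.lt_sqrt_of_sq_lt (by norm_num)
  have s2 : Real.sqrt 129 < 11.36 := by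
    rw [Real.sqrt_lt' (by norm_num)]; norm_num
  have q1 : Real.sqrt 51 ^ 2 = 51 := Real.sq_sqrt (by norm_num)
  have q2 : Real.sqrt 129 ^ 2 = 129 := Real.sq_sqrt (by norm_num)
  have a1 : 0.38 < α := by linarith
  have a2 : α < 0.3934 := by linarith
  have l1 : 0 < 3 * α ^ 2 + 12 * α - 5 := by nlinarith
  have l2 : 3 * α ^ 2 + 9 * α - 4 ≤ 0 := by nlinarith
  clear h₁ h₂ q1 q2 s1 s2
  have p0 : 0 < α := by linarith
  have p1 : 0 < 1 - 2 * α := by linarith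
  have p2 : 0 < 3 * α - 1 := by linarith
  have p3 : 0 < 1 - α := by linarith
  have p4 : 0 < 1 + α := by linarith
  have e1 : Texp α α = (2 - 4 * α) / α := by
    rw [Texp_eq α α (2 / α) 4 rfl]
    · rw [eq_div_iff p0.ne', sub_mul, div_mul_cancel₀ _ p0.ne']; push_cast; ring
    · rw [le_sub_iff_add_le, le_div_iff₀ p0]; push_cast; nlinarith
    · rw [sub_lt_iff_lt_add, div_lt_iff₀ p0]; push_cast; nlinarith
  have e2 : Texp α ((2 - 4 * α) / α) = (3 * α - 1) / (1 - 2 * α) := by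
    rw [Texp_eq α _ (α / (1 - 2 * α)) 1]
    · rw [eq_div_iff p1.ne', sub_mul, div_mul_cancel₀ _ p1.ne']; push_cast; ring
    · rw [div_div_eq_mul_div, show 2 - 4 * α = 2 * (1 - 2 * α) by ring]; exact mul_div_mul_left _ _ two_ne_zero
    · rw [le_sub_iff_add_le, le_div_iff₀ p1]; push_cast; nlinarith
    · rw [sub_lt_iff_lt_add, div_lt_iff₀ p1]; push_cast; nlinarith
  have e3 : Texp α ((3 * α - 1) / (1 - 2 * α)) = (4 - 10 * α) / (3 * α - 1) := by
    rw [Texp_eq α _ (2 * (1 - 2 * α) / (3 * α - 1)) 2]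
    · rw [eq_div_iff p2.ne', sub_mul, div_mul_cancel₀ _ p2.ne']; push_cast; ring
    · rw [div_div_eq_mul_div]
    · rw [le_sub_iff_add_le, le_div_iff₀ p2]; push_cast; nlinarith
    · rw [sub_lt_iff_lt_add, div_lt_iff₀ p2]; push_cast; nlinarith
  have f1 : Texp α (α + 1) = (1 - α) / (1 + α) := by
    rw [add_comm α 1, Texp_eq α (1 + α) (2 / (1 + α)) 1 rfl]
    · rw [eq_div_iff p4.ne', sub_mul, div_mul_cancel₀ _ p4.ne']; push_cast; ring
    · rw [le_sub_iff_add_le, le_div_iff₀ p4]; push_cast; nlinarith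
    · rw [sub_lt_iff_lt_add, div_lt_iff₀ p4]; push_cast; nlinarith
  have f2 : Texp α ((1 - α) / (1 + α)) = 2 * (3 * α - 1) / (1 - α) := by
    rw [Texp_eq α _ (2 * (1 + α) / (1 - α)) 4]
    · rw [eq_div_iff p3.ne', sub_mul, div_mul_cancel₀ _ p3.ne']; push_cast; ring
    · rw [div_div_eq_mul_div]
    · rw [le_sub_iff_add_le, le_div_iff₀ p3]; push_cast; nlinarith
    · rw [sub_lt_iff_lt_add, div_lt_iff₀ p3]; push_cast; nlinarith
  have f3 : Texp α (2 * (3 * α - 1) / (1 - α)) = (4 - 10 * α) / (3 * α - 1) := by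
    rw [Texp_eq α _ ((1 - α) / (3 * α - 1)) 3]
    · rw [eq_div_iff p2.ne', sub_mul, div_mul_cancel₀ _ p2.ne']; push_cast; ring
    · rw [div_div_eq_mul_div]; exact mul_div_mul_left _ _ two_ne_zero
    · rw [le_sub_iff_add_le, le_div_iff₀ p2]; push_cast; nlinarith
    · rw [sub_lt_iff_lt_add, div_lt_iff₀ p2]; push_cast; nlinarith
  rw [e1, e2, e3, f1, f2, f3]
  exact ⟨rfl, rfl⟩
end

section
/- Let α ∈ ((√129 − 9)/6, √2 − 1) and let T_α be the 2-expansion map on [α, α+1]. Then T_α³(α) = T_α³(α + 1) = (3 − 7α)/(3α − 1). -/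
theorem Texp_eval (α x y : ℝ) (k : ℤ) (h : 2 / x = y) (h1 : (k : ℝ) + α ≤ y) (h2 : y < k + 1 + α) :
    Texp α x = y - k := by
  have : ⌊2 / x - α⌋ = k := by
    rw [Int.floor_eq_iff, h]
    constructor <;> linarith
  rw [Texp, this, h]

theorem stmt_5 (α : ℝ) (h₁ : (Real.sqrt 129 - 9) / 6 < α) (h₂ : α < Real.sqrt 2 - 1) :
    Texp α (Texp α (Texp α α)) = (3 - 7 * α) / (3 * α - 1) ∧
    Texp α (Texp α (Texp α (α + 1))) = (3 - 7 * α) / (3 * α - 1) := by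
  have s1 : (11.35 : ℝ) < Real.sqrt 129 := Real.lt_sqrt_of_sq_lt (by norm_num)
  have s2 : Real.sqrt 2 < 1.415 := by
    rw [Real.sqrt_lt' (by norm_num)]; norm_num
  have a1 : 0.39 < α := by linarith
  have a2 : α < 0.415 := by linarith
  have p1 : 3 * α ^ 2 + 9 * α > 4 := by
    have := Real.sq_sqrt (show (0 : ℝ) ≤ 129 by norm_num)
    nlinarith
  have p2 : α ^ 2 + 2 * α < 1 := by
    have := Real.sq_sqrt (show (0 : ℝ) ≤ 2 by norm_num)
    nlinarith
  have d0 : 0 < α := by linarith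
  have d1 : 0 < 1 - 2 * α := by linarith
  have d2 : 0 < 3 * α - 1 := by linarith
  have d3 : 0 < 1 - α := by linarith
  have d4 : 0 < α + 1 := by linarith
  have n0 := d0.ne'
  have n1 := d1.ne'
  have n2 := d2.ne'
  have n3 := d3.ne'
  have n4 := d4.ne'
  constructor
  · have e1 : Texp α α = 2 * (1 - 2 * α) / α := by
      rw [Texp_eval α α (2 / α) 4 rfl (by rw [le_div_iff₀ d0]; push_cast; nlinarith)
        (by rw [div_lt_iff₀ d0]; push_cast; nlinarith)]
      rw [eq_div_iff n0, sub_mul, div_mul_cancel₀ _ n0]; push_cast; ring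
    have e2 : Texp α (2 * (1 - 2 * α) / α) = (3 * α - 1) / (1 - 2 * α) := by
      rw [Texp_eval α _ (α / (1 - 2 * α)) 1 (by field_simp)
        (by rw [le_div_iff₀ d1]; push_cast; nlinarith)
        (by rw [div_lt_iff₀ d1]; push_cast; nlinarith)]
      rw [eq_div_iff n1, sub_mul, div_mul_cancel₀ _ n1]; push_cast; ring
    rw [e1, e2, Texp_eval α _ (2 * (1 - 2 * α) / (3 * α - 1)) 1 (by field_simp)
        (by rw [le_div_iff₀ d2]; push_cast; nlinarith)
        (by rw [div_lt_iff₀ d2]; push_cast; nlinarith)]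
    rw [eq_div_iff n2, sub_mul, div_mul_cancel₀ _ n2]; push_cast; ring
  · have e1 : Texp α (α + 1) = (1 - α) / (α + 1) := by
      rw [Texp_eval α _ (2 / (α + 1)) 1 rfl (by rw [le_div_iff₀ d4]; push_cast; nlinarith)
        (by rw [div_lt_iff₀ d4]; push_cast; nlinarith)]
      rw [eq_div_iff n4, sub_mul, div_mul_cancel₀ _ n4]; push_cast; ring
    have e2 : Texp α ((1 - α) / (α + 1)) = 2 * (3 * α - 1) / (1 - α) := by
      rw [Texp_eval α _ (2 * (α + 1) / (1 - α)) 4 (by field_simp)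
        (by rw [le_div_iff₀ d3]; push_cast; nlinarith)
        (by rw [div_lt_iff₀ d3]; push_cast; nlinarith)]
      rw [eq_div_iff n3, sub_mul, div_mul_cancel₀ _ n3]; push_cast; ring
    rw [e1, e2, Texp_eval α _ ((1 - α) / (3 * α - 1)) 2 (by field_simp)
        (by rw [le_div_iff₀ d2]; push_cast; nlinarith)
        (by rw [div_lt_iff₀ d2]; push_cast; nlinarith)]
    rw [eq_div_iff n2, sub_mul, div_mul_cancel₀ _ n2]; push_cast; ring
end

section
/- Let α ∈ ((√33 − 5)/2, √2 − 1), let T_α(x) = 2/x − ⌊2/x − α⌋ on [α, α+1] with digit d(x) = ⌊2/x − α⌋, and set A = (√33 − 5)/2, B = √2 − 1, C = (√33 − 3)/6, D = 2√2 − 2, E = (√33 − 3)/2, F = √2. Define the lower boundary ℓ(x) = A for x ∈ [α, (6α−2)/(1−α)], ℓ(x) = B for x ∈ ((6α−2)/(1−α), (2−4α)/α], ℓ(x) = C for x ∈ ((2−4α)/α, α+1], and the upper boundary u(x) = D for x ∈ [α, (1−α)/(1+α)], u(x) = E for x ∈ ((1−α)/(1+α), (3α−1)/(1−2α)], u(x)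 = F for x ∈ ((3α−1)/(1−2α), α+1], and let Ω_α = {(x, y) : x ∈ [α, α+1], ℓ(x) ≤ y ≤ u(x)}. Then the map 𝒯(x, y) = (T_α(x), 2/(d(x) + y)) maps Ω_α into Ω_α (up to a Lebesgue-null set) and preserves the probability measure on Ω_α with density H·2/(2 + xy)² with respect to two-dimensional Lebesgue measure, where H = 1/log((1/32)(3 + 2√2)(7 + √33)(√33 − 5)²). -/
open MeasureTheory Set

/-- Lower boundary of the natural extension domain:
`A = (√33-5)/2` on `[α, (6α-2)/(1-α)]`, `B = √2-1` on `((6α-2)/(1-α), (2-4α)/α]`,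
`C = (√33-3)/6` on `((2-4α)/α, α+1]`. -/
noncomputable def lb (α x : ℝ) : ℝ :=
  if x ≤ (6 * α - 2) / (1 - α) then (Real.sqrt 33 - 5) / 2
  else if x ≤ (2 - 4 * α) / α then Real.sqrt 2 - 1
  else (Real.sqrt 33 - 3) / 6

/-- Upper boundary of the natural extension domain:
`D = 2√2-2` on `[α, (1-α)/(1+α)]`, `E = (√33-3)/2` on `((1-α)/(1+α), (3α-1)/(1-2α)]`,
`F = √2` on `((3α-1)/(1-2α), α+1]`. -/
noncomputable def ub (α x : ℝ) : ℝ :=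
  if x ≤ (1 - α) / (1 + α) then 2 * Real.sqrt 2 - 2
  else if x ≤ (3 * α - 1) / (1 - 2 * α) then (Real.sqrt 33 - 3) / 2
  else Real.sqrt 2

/-- The natural extension domain `Ω_α`. -/
def natExtDom (α : ℝ) : Set (ℝ × ℝ) :=
  {p | p.1 ∈ Icc α (α + 1) ∧ lb α p.1 ≤ p.2 ∧ p.2 ≤ ub α p.1}

/-- The natural extension map `𝒯(x, y) = (T_α(x), 2/(d(x) + y))` with `d(x) = ⌊2/x - α⌋`. -/
noncomputable def natExtMap (α : ℝ) (p : ℝ × ℝ) : ℝ × ℝ :=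
  (Texp α p.1, 2 / (↑⌊2 / p.1 - α⌋ + p.2))


structure Facts (α A B C D E F p1 p2 q1 q2 w : ℝ) : Prop where
  hα : 0 < α
  hA : 0 < A
  hAB : A < B
  hBC : B < C
  hCD : C < D
  hDE : D < E
  hEF : E < F
  AE : E = A + 1
  BF : F = B + 1
  dA : 2 / A = 4 + E
  dB : 2 / B = 4 + D
  dC : 2 / C = 3 + E
  dD : 2 / D = 2 + B
  dE : 2 / E = 1 + C
  dF : 2 / F = 1 + B
  ap1 : α < p1
  p12 : p1 < p2
  p2a : p2 < α + 1
  aq1 : α < q1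
  q12 : q1 < q2
  q2a : q2 < α + 1
  dq1 : 2 / q1 = p1 + 4
  dp2 : 2 / p2 = q2 + 1
  dp1 : 2 / p1 = w + 1
  dq2 : 2 / q2 = w
  da : 2 / α = p2 + 4
  da1 : 2 / (α + 1) = 1 + q1
  w1 : 1 + α < w
  w2 : 1 + q1 < w
  w3 : w < 3 + p2

theorem alpha_bds (α : ℝ) (h₁ : (Real.sqrt 33 - 5) / 2 < α) (h₂ : α < Real.sqrt 2 - 1) :
    0.372 < α ∧ α < 0.4143 ∧ 0 < α ^ 2 + 5 * α - 2 ∧ α ^ 2 + 2 * α - 1 < 0 ∧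
    5.744 < Real.sqrt 33 ∧ Real.sqrt 33 < 5.745 ∧ 1.4142 < Real.sqrt 2 ∧ Real.sqrt 2 < 1.4143 ∧
    Real.sqrt 33 ^ 2 = 33 ∧ Real.sqrt 2 ^ 2 = 2 := by
  have a1 : Real.sqrt 33 ^ 2 = 33 := Real.sq_sqrt (by norm_num)
  have a2 : Real.sqrt 2 ^ 2 = 2 := Real.sq_sqrt (by norm_num)
  have b1 : 5.744 < Real.sqrt 33 := Real.lt_sqrt_of_sq_lt (by norm_num)
  have b2 : Real.sqrt 33 < 5.745 := (Real.sqrt_lt' (by norm_num)).2 (by norm_num)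
  have b3 : 1.4142 < Real.sqrt 2 := Real.lt_sqrt_of_sq_lt (by norm_num)
  have b4 : Real.sqrt 2 < 1.4143 := (Real.sqrt_lt' (by norm_num)).2 (by norm_num)
  refine ⟨by linarith, by linarith, ?_, ?_, b1, b2, b3, b4, a1, a2⟩ <;> nlinarith

theorem facts (α : ℝ) (h₁ : (Real.sqrt 33 - 5) / 2 < α) (h₂ : α < Real.sqrt 2 - 1) :
    Facts α ((Real.sqrt 33 - 5) / 2) (Real.sqrt 2 - 1) ((Real.sqrt 33 - 3) / 6)
      (2 * Real.sqrt 2 - 2) ((Real.sqrt 33 - 3) / 2) (Real.sqrt 2)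
      ((6 * α - 2) / (1 - α)) ((2 - 4 * α) / α) ((1 - α) / (1 + α)) ((3 * α - 1) / (1 - 2 * α))
      ((2 - 4 * α) / (3 * α - 1)) := by
  obtain ⟨c1, c2, c3, c4, c5, c6, c7, c8, c9, c10⟩ := alpha_bds α h₁ h₂
  have e1 : 0 < α := by linarith
  have e2 : 0 < 1 - α := by linarith
  have e3 : 0 < 1 + α := by linarith
  have e4 : 0 < 1 - 2 * α := by linarith
  have e5 : 0 < 3 * α - 1 := by linarith
  have e6 : 6 * α - 2 ≠ 0 := by linarith
  have e7 : 2 - 4 * α ≠ 0 := by linarith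
  constructor
  case dA => rw [div_eq_iff (by linarith)]; nlinarith
  case dB => rw [div_eq_iff (by linarith)]; nlinarith
  case dC => rw [div_eq_iff (by linarith)]; nlinarith
  case dD => rw [div_eq_iff (by linarith)]; nlinarith
  case dE => rw [div_eq_iff (by linarith)]; nlinarith
  case dF => rw [div_eq_iff (by linarith)]; nlinarith
  case dq1 => field_simp; ring
  case dp2 => rw [div_div_eq_mul_div, div_eq_iff e7]; field_simp; ring
  case dp1 =>
    have : 6 * α - 2 = 2 * (3 * α - 1) := by ring
    rw [this]; field_simp; ring
  case dq2 => field_simp; ring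
  case da => field_simp; ring
  case da1 => field_simp; ring
  case ap1 => rw [lt_div_iff₀ (by linarith)]; nlinarith
  case p12 => rw [div_lt_div_iff₀ (by linarith) (by linarith)]; nlinarith
  case p2a => rw [div_lt_iff₀ (by linarith)]; nlinarith
  case aq1 => rw [lt_div_iff₀ (by linarith)]; nlinarith
  case q12 => rw [div_lt_div_iff₀ (by linarith) (by linarith)]; nlinarith
  case q2a => rw [div_lt_iff₀ (by linarith)]; nlinarith
  case w1 => rw [lt_div_iff₀ (by linarith)]; nlinarith
  case w2 =>
    have : 1 + (1 - α) / (1 + α) = 2 / (1 + α) := by field_simp; ring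
    rw [this, div_lt_div_iff₀ (by linarith) (by linarith)]; nlinarith
  case w3 =>
    have : 3 + (2 - 4 * α) / α = (2 - α) / α := by field_simp; ring
    rw [this, div_lt_div_iff₀ (by linarith) (by linarith)]; nlinarith
  all_goals linarith

noncomputable def lf (A B C p1 p2 x : ℝ) : ℝ := if x ≤ p1 then A else if x ≤ p2 then B else C

theorem two_div_le_iff {z c e : ℝ} (hz : 0 < z) (hc : 0 < c) (h : 2 / c = e) :
    2 / z ≤ c ↔ e ≤ z := by
  subst h; rw [div_le_iff₀ hz, div_le_iff₀ hc, mul_comm]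

theorem le_two_div_iff {z c e : ℝ} (hz : 0 < z) (hc : 0 < c) (h : 2 / c = e) :
    c ≤ 2 / z ↔ z ≤ e := by
  subst h; rw [le_div_iff₀ hz, le_div_iff₀ hc, mul_comm]

theorem lf_inv {A B C p1 p2 e1 e2 z : ℝ} (hz : 0 < z) (h1 : 0 < p1) (h2 : 0 < p2)
    (he1 : 2 / p1 = e1) (he2 : 2 / p2 = e2) :
    lf A B C p1 p2 (2 / z) = if e1 ≤ z then A else if e2 ≤ z then B else C := by
  simp only [lf, two_div_le_iff hz h1 he1, two_div_le_iff hz h2 he2]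

theorem two_div_lf {A B C p1 p2 x : ℝ} :
    2 / lf A B C p1 p2 x = if x ≤ p1 then 2 / A else if x ≤ p2 then 2 / B else 2 / C := by
  simp only [lf]; split_ifs <;> rfl

theorem lf_bds {A B C p1 p2 x : ℝ} (h : A < B) (h' : B < C) :
    A ≤ lf A B C p1 p2 x ∧ lf A B C p1 p2 x ≤ C := by
  simp only [lf]; split_ifs <;> constructor <;> linarith

theorem fibre {α A B C D E F p1 p2 q1 q2 w : ℝ} (H : Facts α A B C D E F p1 p2 q1 q2 w)
    {x : ℝ} (hx : α < x) (hx' : x < α + 1) (n1 : x ≠ p1) (n2 : x ≠ p2) (n3 : x ≠ q1) (n4 : x ≠ q2)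
    (L U : ℝ → ℝ) (hL : L = lf A B C p1 p2) (hU : U = lf D E F q1 q2) :
    U (2 / (2 + x)) = L (2 / (3 + x)) + 1 ∧
    (q1 < x → U (2 / (1 + x)) = L (2 / (2 + x)) + 1 ∧ 2 / U x = 1 + L (2 / (1 + x))) ∧
    (x < q1 → 2 / U x = 2 + L (2 / (2 + x))) ∧
    (x < p2 → U (2 / (3 + x)) = L (2 / (4 + x)) + 1 ∧ 2 / L x = 4 + U (2 / (4 + x))) ∧
    (p2 < x → 2 / L x = 3 + U (2 / (3 + x))) := by
  obtain ⟨hα, hA, hAB, hBC, hCD, hDE, hEF, AE, BF, dA, dB, dC, dD, dE, dF, ap1, p12, p2a, aq1, q12,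
    q2a, dq1, dp2, dp1, dq2, da, da1, w1, w2, w3⟩ := H
  subst hL hU
  rw [two_div_lf, two_div_lf, dA, dB, dC, dD, dE, dF]
  rw [lf_inv (by linarith) (by linarith) (by linarith) dp1 dp2,
    lf_inv (by linarith) (by linarith) (by linarith) dp1 dp2,
    lf_inv (by linarith) (by linarith) (by linarith) dp1 dp2,
    lf_inv (by linarith) (by linarith) (by linarith) dp1 dp2,
    lf_inv (by linarith) (by linarith) (by linarith) dq1 dq2,
    lf_inv (by linarith) (by linarith) (by linarith) dq1 dq2,
    lf_inv (by linarith) (by linarith) (by linarith) dq1 dq2,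
    lf_inv (by linarith) (by linarith) (by linarith) dq1 dq2]
  have n1 := lt_or_gt_of_ne n1
  have n4 := lt_or_gt_of_ne n4
  refine ⟨?_, fun h => ⟨?_, ?_⟩, fun h => ?_, fun h => ⟨?_, ?_⟩, fun h => ?_⟩ <;>
    split_ifs <;> first
      | linarith
      | (exfalso; rcases n1 with n1 | n1 <;> linarith)
      | (exfalso; rcases n4 with n1 | n1 <;> linarith)

def Wf (α : ℝ) (d : ℝ) : Set (ℝ × ℝ) :=
  {p | (α ≤ p.1 ∧ p.1 < α + 1) ∧ 0 < p.2 ∧ (2 / (d + p.1), 2 / p.2 - d) ∈ natExtDom α}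

theorem lb_eq (α : ℝ) : lb α = lf ((Real.sqrt 33 - 5) / 2) (Real.sqrt 2 - 1)
   ((Real.sqrt 33 - 3) / 6) ((6 * α - 2) / (1 - α)) ((2 - 4 * α) / α) := rfl

theorem ub_eq (α : ℝ) : ub α = lf (2 * Real.sqrt 2 - 2) ((Real.sqrt 33 - 3) / 2) (Real.sqrt 2)
   ((1 - α) / (1 + α)) ((3 * α - 1) / (1 - 2 * α)) := rfl

theorem Wf_mem_iff {α A B C D E F p1 p2 q1 q2 w : ℝ} (H : Facts α A B C D E F p1 p2 q1 q2 w)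
    {d x y : ℝ} (hd : 1 ≤ d) (hx : α < x) (hx' : x < α + 1) (hy : 0 < y) :
    (x, y) ∈ Wf α d ↔ (1 + q1 ≤ d + x ∧ d + x ≤ p2 + 4) ∧ d + lb α (2 / (d + x)) ≤ 2 / y ∧
      2 / y ≤ d + ub α (2 / (d + x)) := by
  have := H.hα
  simp only [Wf, natExtDom, mem_ofPred_eq, mem_Icc]
  rw [two_div_le_iff (by linarith) (by linarith) H.da1, le_two_div_iff (by linarith) H.hα H.da]
  constructor
  · rintro ⟨_, _, ⟨h1, h2⟩, h3, h4⟩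
    exact ⟨⟨h2, h1⟩, by linarith, by linarith⟩
  · rintro ⟨⟨h1, h2⟩, h3, h4⟩
    exact ⟨⟨hx.le, hx'⟩, hy, ⟨h2, h1⟩, by linarith, by linarith⟩

theorem dom_pos {α : ℝ} (h₁ : (Real.sqrt 33 - 5) / 2 < α) (h₂ : α < Real.sqrt 2 - 1) {p : ℝ × ℝ}
    (hp : p ∈ natExtDom α) : 0 < p.1 ∧ 0 < p.2 := by
  have H := facts α h₁ h₂
  have h1 := hp.1.1
  have h2 := hp.2.1
  rw [lb_eq] at h2
  have h3 := (lf_bds H.hAB H.hBC (p1 := (6 * α - 2) / (1 - α)) (p2 := (2 - 4 * α) / α) (x := p.1)).1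
  have := H.hα
  have := H.hA
  constructor <;> linarith

theorem dom_mem_iff {α : ℝ} (h₁ : (Real.sqrt 33 - 5) / 2 < α) (h₂ : α < Real.sqrt 2 - 1)
    {x y : ℝ} (hx : α < x) (hx' : x < α + 1) (hy : 0 < y) :
    (x, y) ∈ natExtDom α ↔ 2 / ub α x ≤ 2 / y ∧ 2 / y ≤ 2 / lb α x := by
  have H := facts α h₁ h₂
  have h3 : 0 < lb α x := by
    have := (lf_bds H.hAB H.hBC (p1 := (6 * α - 2) / (1 - α)) (p2 := (2 - 4 * α) / α) (x := x)).1
    rw [← lb_eq] at this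
    exact H.hA.trans_le this
  have h4 : 0 < ub α x := by
    have := (lf_bds H.hDE H.hEF (p1 := (1 - α) / (1 + α)) (p2 := (3 * α - 1) / (1 - 2 * α)) (x := x)).1
    rw [← ub_eq] at this
    have := H.hA; have := H.hAB; have := H.hBC; have := H.hCD
    linarith
  simp only [natExtDom, mem_ofPred_eq, mem_Icc]
  rw [div_le_div_iff_of_pos_left two_pos h4 hy, div_le_div_iff_of_pos_left two_pos hy h3]
  constructor
  · rintro ⟨_, a, b⟩; exact ⟨b, a⟩
  · rintro ⟨a, b⟩; exact ⟨⟨hx.le, hx'.le⟩, b, a⟩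

theorem lb_lt_ub {α : ℝ} (h₁ : (Real.sqrt 33 - 5) / 2 < α) (h₂ : α < Real.sqrt 2 - 1)
    (x x' : ℝ) : lb α x < ub α x' := by
  have H := facts α h₁ h₂
  have h3 := (lf_bds H.hAB H.hBC (p1 := (6 * α - 2) / (1 - α)) (p2 := (2 - 4 * α) / α) (x := x)).2
  have h4 := (lf_bds H.hDE H.hEF (p1 := (1 - α) / (1 + α)) (p2 := (3 * α - 1) / (1 - 2 * α)) (x := x')).1
  rw [← lb_eq] at h3; rw [← ub_eq] at h4
  have := H.hCD
  linarith

/-- generic points -/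
def Gen (α : ℝ) (p : ℝ × ℝ) : Prop :=
  (p.1 ≠ α ∧ p.1 ≠ α + 1 ∧ p.1 ≠ (6 * α - 2) / (1 - α) ∧ p.1 ≠ (2 - 4 * α) / α ∧
    p.1 ≠ (1 - α) / (1 + α) ∧ p.1 ≠ (3 * α - 1) / (1 - 2 * α)) ∧
  ∀ d ∈ ({1, 2, 3, 4} : Set ℝ), ∀ c ∈ ({(Real.sqrt 33 - 5) / 2, Real.sqrt 2 - 1,
    (Real.sqrt 33 - 3) / 6} : Set ℝ), p.2 ≠ 2 / (d + c)

theorem gen_ae (α : ℝ) : ∀ᵐ p : ℝ × ℝ, Gen α p := by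
  have h1 : ∀ c : ℝ, ∀ᵐ p : ℝ × ℝ, p.1 ≠ c := fun c =>
    Measure.quasiMeasurePreserving_fst.ae (Measure.ae_ne volume c)
  have h2 : ∀ c : ℝ, ∀ᵐ p : ℝ × ℝ, p.2 ≠ c := fun c =>
    Measure.quasiMeasurePreserving_snd.ae (Measure.ae_ne volume c)
  unfold Gen
  simp only [Filter.eventually_and]
  refine ⟨⟨h1 _, h1 _, h1 _, h1 _, h1 _, h1 _⟩, ?_⟩
  rw [eventually_countable_ball (Set.toFinite _).countable]
  intro d _
  rw [eventually_countable_ball (Set.toFinite _).countable]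
  intro c _
  exact h2 _

theorem gen_key {α : ℝ} (h₁ : (Real.sqrt 33 - 5) / 2 < α) (h₂ : α < Real.sqrt 2 - 1)
    {p : ℝ × ℝ} (g : Gen α p) :
    (p ∈ natExtDom α ↔ p ∈ Wf α 1 ∨ p ∈ Wf α 2 ∨ p ∈ Wf α 3 ∨ p ∈ Wf α 4) ∧
    ¬ (p ∈ Wf α 1 ∧ p ∈ Wf α 2) ∧ ¬ (p ∈ Wf α 1 ∧ p ∈ Wf α 3) ∧ ¬ (p ∈ Wf α 1 ∧ p ∈ Wf α 4) ∧
    ¬ (p ∈ Wf α 2 ∧ p ∈ Wf α 3) ∧ ¬ (p ∈ Wf α 2 ∧ p ∈ Wf α 4) ∧ ¬ (p ∈ Wf α 3 ∧ p ∈ Wf α 4) := by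
  have H := facts α h₁ h₂
  obtain ⟨x, y⟩ := p
  by_cases hb : (α < x ∧ x < α + 1) ∧ 0 < y
  swap
  · have a1 : (x, y) ∉ natExtDom α := fun h => hb
      ⟨⟨lt_of_le_of_ne h.1.1 (Ne.symm g.1.1), lt_of_le_of_ne h.1.2 g.1.2.1⟩, (dom_pos h₁ h₂ h).2⟩
    have a2 : ∀ d, (x, y) ∉ Wf α d := fun d h => hb
      ⟨⟨lt_of_le_of_ne h.1.1 (Ne.symm g.1.1), h.1.2⟩, h.2.1⟩
    simp [a1, a2]
  obtain ⟨⟨hx, hx'⟩, hy⟩ := hb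
  obtain ⟨⟨_, _, n1, n2, n3, n4⟩, n5⟩ := g
  simp only at n1 n2 n3 n4 n5
  have key : ∀ d ∈ ({1, 2, 3, 4} : Set ℝ), 2 / y ≠ d + lb α (2 / (d + x)) := by
    intro d hd he
    have hd0 : 0 < d := by
      simp only [mem_insert_iff, mem_singleton_iff] at hd
      rcases hd with rfl | rfl | rfl | rfl <;> norm_num
    refine n5 d hd (lb α (2 / (d + x))) ?_ ?_
    · unfold lb; split_ifs <;> simp
    · rw [← he]; field_simp
  have k1 := key 1 (by simp)
  have k2 := key 2 (by simp)
  have k3 := key 3 (by simp)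
  have k4 := key 4 (by simp)
  obtain ⟨f1, f2, f3, f4, f5⟩ := fibre H hx hx' n1 n2 n3 n4 _ _ (lb_eq α) (ub_eq α)
  have l1 := lb_lt_ub h₁ h₂ (2 / (1 + x)) (2 / (1 + x))
  have l2 := lb_lt_ub h₁ h₂ (2 / (2 + x)) (2 / (2 + x))
  have l3 := lb_lt_ub h₁ h₂ (2 / (3 + x)) (2 / (3 + x))
  have l4 := lb_lt_ub h₁ h₂ (2 / (4 + x)) (2 / (4 + x))
  rw [dom_mem_iff h₁ h₂ hx hx' hy, Wf_mem_iff H le_rfl hx hx' hy,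
    Wf_mem_iff H (by norm_num : (1 : ℝ) ≤ 2) hx hx' hy,
    Wf_mem_iff H (by norm_num : (1 : ℝ) ≤ 3) hx hx' hy,
    Wf_mem_iff H (by norm_num : (1 : ℝ) ≤ 4) hx hx' hy]
  obtain ⟨hα, hA, hAB, hBC, hCD, hDE, hEF, AE, BF, dA, dB, dC, dD, dE, dF, ap1, p12, p2a, aq1, q12,
    q2a, dq1, dp2, dp1, dq2, da, da1, w1, w2, w3⟩ := H
  clear dA dB dC dD dE dF n5 dq1 dp2 dp1 dq2 key n1 n4
  generalize lb α (2 / (1 + x)) = L1 at *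
  generalize lb α (2 / (2 + x)) = L2 at *
  generalize lb α (2 / (3 + x)) = L3 at *
  generalize lb α (2 / (4 + x)) = L4 at *
  generalize ub α (2 / (1 + x)) = U1 at *
  generalize ub α (2 / (2 + x)) = U2 at *
  generalize ub α (2 / (3 + x)) = U3 at *
  generalize ub α (2 / (4 + x)) = U4 at *
  generalize 2 / lb α x = L at *
  generalize 2 / ub α x = U at *
  generalize (6 * α - 2) / (1 - α) = p1 at *
  generalize (2 - 4 * α) / α = p2 at *
  generalize (1 - α) / (1 + α) = q1 at *
  generalize (3 * α - 1) / (1 - 2 * α) = q2 at *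
  generalize 2 / y = z at *
  have v2 : 1 + q1 ≤ 2 + x ∧ 2 + x ≤ p2 + 4 := ⟨by linarith, by linarith⟩
  have v3 : 1 + q1 ≤ 3 + x ∧ 3 + x ≤ p2 + 4 := ⟨by linarith, by linarith⟩
  have v1 : (1 + q1 ≤ 1 + x ∧ 1 + x ≤ p2 + 4) ↔ q1 < x :=
    ⟨fun h => lt_of_le_of_ne (by linarith) (Ne.symm n3), fun h => ⟨by linarith, by linarith⟩⟩
  have v4 : (1 + q1 ≤ 4 + x ∧ 4 + x ≤ p2 + 4) ↔ x < p2 :=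
    ⟨fun h => lt_of_le_of_ne (by linarith) n2, fun h => ⟨by linarith, by linarith⟩⟩
  simp only [v1, v2, v3, v4, true_and, and_true]
  clear v1 v2 v3 v4
  clear da da1 w1 w2 w3 ap1 p12 p2a aq1 q12 q2a hAB hBC hCD hDE hEF AE BF hA
  rcases lt_or_gt_of_ne n3 with hq | hq <;> rcases lt_or_gt_of_ne n2 with hp | hp <;>
    simp only [hq, hp, forall_const, not_lt_of_gt hq, not_lt_of_gt hp, IsEmpty.forall_iff, true_and,
      false_and, false_or, or_false, and_false, not_false_eq_true] at f2 f3 f4 f5 ⊢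
  all_goals
    clear hq hp n2 n3 hα hx hx' hy h₁ h₂
    try obtain ⟨f21, f22⟩ := f2
    try obtain ⟨f41, f42⟩ := f4
    refine ⟨⟨?_, ?_⟩, ?_⟩
    · rintro ⟨u1, u2⟩
      rcases le_total z (2 + L2) with t1 | t1 <;> rcases le_total z (3 + L3) with t2 | t2 <;>
        rcases le_total z (4 + L4) with t3 | t3 <;> first
        | exact ⟨by linarith, by linarith⟩
        | exact Or.inl ⟨by linarith, by linarith⟩
        | exact Or.inr ⟨by linarith, by linarith⟩
        | exact Or.inr (Or.inl ⟨by linarith, by linarith⟩)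
        | exact Or.inr (Or.inr ⟨by linarith, by linarith⟩)
        | exact Or.inr (Or.inr (Or.inl ⟨by linarith, by linarith⟩))
        | exact Or.inr (Or.inr (Or.inr ⟨by linarith, by linarith⟩))
    · intro h
      first
        | (rcases h with ⟨h, h'⟩ | ⟨h, h'⟩ | ⟨h, h'⟩ | ⟨h, h'⟩ <;> constructor <;> linarith)
        | (rcases h with ⟨h, h'⟩ | ⟨h, h'⟩ | ⟨h, h'⟩ <;> constructor <;> linarith)
        | (rcases h with ⟨h, h'⟩ | ⟨h, h'⟩ <;> constructor <;> linarith)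
    · have k1' := lt_or_gt_of_ne k1
      have k2' := lt_or_gt_of_ne k2
      have k3' := lt_or_gt_of_ne k3
      have k4' := lt_or_gt_of_ne k4
      and_intros <;> first
        | trivial
        | (rintro ⟨⟨a1, a2⟩, a3, a4⟩
           rcases k1' with k1' | k1' <;> rcases k2' with k2' | k2' <;>
             rcases k3' with k3' | k3' <;> rcases k4' with k4' | k4' <;> linarith)

theorem meas_lf (A B C p1 p2 : ℝ) : Measurable (lf A B C p1 p2) := by
  unfold lf
  refine Measurable.ite measurableSet_Iic measurable_const ?_
  exact Measurable.ite measurableSet_Iic measurable_const measurable_const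

theorem meas_lb (α : ℝ) : Measurable (lb α) := by rw [lb_eq]; exact meas_lf _ _ _ _ _

theorem meas_ub (α : ℝ) : Measurable (ub α) := by rw [ub_eq]; exact meas_lf _ _ _ _ _

theorem meas_dom (α : ℝ) : MeasurableSet (natExtDom α) := by
  have h1 := meas_lb α
  have h2 := meas_ub α
  have : natExtDom α = (Prod.fst ⁻¹' Icc α (α + 1)) ∩ ({p | lb α p.1 ≤ p.2} ∩ {p | p.2 ≤ ub α p.1}) := by
    ext p; simp [natExtDom]
  rw [this]
  refine (measurable_fst measurableSet_Icc).inter (MeasurableSet.inter ?_ ?_)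
  · exact measurableSet_le (h1.comp measurable_fst) measurable_snd
  · exact measurableSet_le measurable_snd (h2.comp measurable_fst)

theorem meas_map (α : ℝ) : Measurable (natExtMap α) := by
  unfold natExtMap Texp
  have : Measurable fun p : ℝ × ℝ => ((⌊2 / p.1 - α⌋ : ℤ) : ℝ) :=
    (measurable_from_top (f := fun n : ℤ => (n : ℝ))).comp
      (Int.measurable_floor.comp ((measurable_const.div measurable_fst).sub measurable_const))
  exact ((measurable_const.div measurable_fst).sub this).prodMk
    (measurable_const.div (this.add measurable_snd))

theorem meas_W (α d : ℝ) : MeasurableSet (Wf α d) := by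
  have h : Measurable fun p : ℝ × ℝ => ((2 / (d + p.1), 2 / p.2 - d) : ℝ × ℝ) :=
    (measurable_const.div (measurable_const.add measurable_fst)).prodMk
      ((measurable_const.div measurable_snd).sub measurable_const)
  have : Wf α d = (Prod.fst ⁻¹' Ico α (α + 1)) ∩ ((Prod.snd ⁻¹' Ioi 0) ∩
      ((fun p : ℝ × ℝ => ((2 / (d + p.1), 2 / p.2 - d) : ℝ × ℝ)) ⁻¹' natExtDom α)) := by
    ext p; simp [Wf]
  rw [this]
  exact (measurable_fst measurableSet_Ico).inter
    ((measurable_snd measurableSet_Ioi).inter (h (meas_dom α)))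

noncomputable def phi (d : ℝ) : ℝ × ℝ → ℝ × ℝ := Prod.map (fun x => 2 / x - d) (fun y => 2 / (d + y))

noncomputable def dens (K : ℝ) (p : ℝ × ℝ) : ENNReal := ENNReal.ofReal (K * 2 / (2 + p.1 * p.2) ^ 2)

theorem cov {K d : ℝ} (hd : 1 ≤ d) {V : Set (ℝ × ℝ)} (hV : MeasurableSet V)
    (hpos : ∀ p ∈ V, 0 < p.1 ∧ 0 < p.2) :
    ∫⁻ p in phi d '' V, dens K p = ∫⁻ p in V, dens K p := by
  rw [lintegral_image_eq_lintegral_abs_det_fderiv_mul (f := phi d) volume hV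
    (f' := fun p => (ContinuousLinearMap.toSpanSingleton ℝ (-2 / p.1 ^ 2)).prodMap
      (ContinuousLinearMap.toSpanSingleton ℝ (-2 / (d + p.2) ^ 2)))]
  · refine setLIntegral_congr_fun hV fun p hp => ?_
    obtain ⟨hx, hy⟩ := hpos p hp
    have hdet : ((ContinuousLinearMap.toSpanSingleton ℝ (-2 / p.1 ^ 2)).prodMap
      (ContinuousLinearMap.toSpanSingleton ℝ (-2 / (d + p.2) ^ 2))).det =
        4 / (p.1 ^ 2 * (d + p.2) ^ 2) := by
      rw [ContinuousLinearMap.det, ContinuousLinearMap.coe_prodMap, LinearMap.det_prodMap,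
        LinearMap.det_ring, LinearMap.det_ring]
      simp
      field_simp
      norm_num
    simp only [hdet, dens, phi, Prod.map]
    rw [← ENNReal.ofReal_mul (abs_nonneg _), abs_of_nonneg (by positivity)]
    congr 1
    have h1 : 0 < d + p.2 := by linarith
    have h2 : 2 + (2 / p.1 - d) * (2 / (d + p.2)) = 2 * (2 + p.1 * p.2) / (p.1 * (d + p.2)) := by
      field_simp; ring
    rw [h2]
    have h3 : 0 < 2 + p.1 * p.2 := by positivity
    field_simp
    ring
  · intro p hp
    obtain ⟨hx, hy⟩ := hpos p hp
    have h1 : d + p.2 ≠ 0 := by linarith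
    apply HasFDerivAt.hasFDerivWithinAt
    apply HasFDerivAt.prodMap
    · apply HasDerivAt.hasFDerivAt
      have := ((hasDerivAt_const p.1 (2 : ℝ)).div (hasDerivAt_id p.1) hx.ne').sub_const d
      convert! this using 1
      simp
    · apply HasDerivAt.hasFDerivAt
      have := ((hasDerivAt_const p.2 (2 : ℝ)).div ((hasDerivAt_id p.2).const_add d) h1)
      convert! this using 1
      simp
  · intro p hp q hq h
    obtain ⟨hx, hy⟩ := hpos p hp
    obtain ⟨hx', hy'⟩ := hpos q hq
    simp only [phi, Prod.map, Prod.mk.injEq] at h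
    have e1 : 2 / p.1 = 2 / q.1 := by linarith [h.1]
    have h1 : d + p.2 ≠ 0 := by linarith
    have h2 : d + q.2 ≠ 0 := by linarith
    have h3 := h.2
    rw [div_eq_div_iff hx.ne' hx'.ne'] at e1
    rw [div_eq_div_iff h1 h2] at h3
    ext <;> linarith

def Vf (α : ℝ) (S : Set (ℝ × ℝ)) (d : ℤ) : Set (ℝ × ℝ) :=
  {p | p ∈ natExtDom α ∧ natExtMap α p ∈ S ∧ ⌊2 / p.1 - α⌋ = d}

theorem meas_V (α : ℝ) {S : Set (ℝ × ℝ)} (hS : MeasurableSet S) (d : ℤ) :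
    MeasurableSet (Vf α S d) := by
  have : Measurable fun p : ℝ × ℝ => ⌊2 / p.1 - α⌋ :=
      (Int.measurable_floor.comp ((measurable_const.div measurable_fst).sub measurable_const))
  exact (meas_dom α).inter ((meas_map α hS).inter (this (measurableSet_singleton d)))

theorem image_V {α : ℝ} (h₁ : (Real.sqrt 33 - 5) / 2 < α) (h₂ : α < Real.sqrt 2 - 1)
    (S : Set (ℝ × ℝ)) {d : ℤ} (hd : 1 ≤ d) : phi d '' Vf α S d = S ∩ Wf α d := by
  have hd' : (1 : ℝ) ≤ d := by exact_mod_cast hd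
  have H := facts α h₁ h₂
  have hα := H.hα
  ext ⟨x, y⟩
  constructor
  · rintro ⟨p, ⟨h1, h2, h3⟩, h4⟩
    obtain ⟨hx, hy⟩ := dom_pos h₁ h₂ h1
    have e : natExtMap α p = phi d p := by
      simp [natExtMap, phi, Texp, h3, Prod.map]
    rw [e, h4] at h2
    refine ⟨h2, ?_⟩
    simp only [phi, Prod.map, Prod.mk.injEq] at h4
    obtain ⟨rfl, rfl⟩ := h4
    have h5 := Int.floor_eq_iff.1 h3
    refine ⟨⟨by linarith, by linarith⟩, by positivity, ?_⟩
    have h6 : 0 < d + p.2 := by positivity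
    convert h1 using 1
    ext
    · simp
    · simp
  · rintro ⟨hS, ⟨h1, h2⟩, h3, h4⟩
    simp only at h1 h2 h3 h4
    have hx : 0 < d + x := by linarith
    have e0 : phi d (2 / (d + x), 2 / y - d) = (x, y) := by
      simp [phi]
    have e1 : ⌊2 / (2 / (d + x)) - α⌋ = d := by
      rw [Int.floor_eq_iff, div_div_cancel₀ two_ne_zero]
      constructor <;> linarith
    refine ⟨(2 / (d + x), 2 / y - d), ⟨h4, ?_, e1⟩, e0⟩
    have e : natExtMap α (2 / (d + x), 2 / y - d) = phi d (2 / (d + x), 2 / y - d) := by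
      simp only [natExtMap, phi, Texp, e1, Prod.map]
    rw [e, e0]; exact hS

theorem dom_digit {α : ℝ} (h₁ : (Real.sqrt 33 - 5) / 2 < α) (h₂ : α < Real.sqrt 2 - 1)
    {p : ℝ × ℝ} (hp : p ∈ natExtDom α) : ⌊2 / p.1 - α⌋ ∈ Finset.Icc (1 : ℤ) 4 := by
  have H := facts α h₁ h₂
  obtain ⟨hx, hy⟩ := dom_pos h₁ h₂ hp
  have hα := H.hα
  have e1 : 2 / (α + 1) ≤ 2 / p.1 := div_le_div_of_nonneg_left (by norm_num) hx hp.1.2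
  have e2 : 2 / p.1 ≤ 2 / α := div_le_div_of_nonneg_left (by norm_num) hα hp.1.1
  rw [H.da1] at e1
  rw [H.da] at e2
  have := H.aq1
  have := H.p2a
  rw [Finset.mem_Icc]
  constructor
  · rw [Int.le_floor]; push_cast; linarith
  · rw [← Int.lt_add_one_iff, Int.floor_lt]; push_cast; linarith

theorem pres {α K : ℝ} (h₁ : (Real.sqrt 33 - 5) / 2 < α) (h₂ : α < Real.sqrt 2 - 1) :
    MeasurePreserving (natExtMap α) ((volume.restrict (natExtDom α)).withDensity (dens K))
      ((volume.restrict (natExtDom α)).withDensity (dens K)) := by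
  refine ⟨meas_map α, ?_⟩
  ext S hS
  rw [Measure.map_apply (meas_map α) hS, withDensity_apply _ (meas_map α hS),
    withDensity_apply _ hS, Measure.restrict_restrict (meas_map α hS), Measure.restrict_restrict hS]
  have u1 : natExtMap α ⁻¹' S ∩ natExtDom α = ⋃ d ∈ Finset.Icc (1 : ℤ) 4, Vf α S d := by
    ext p
    simp only [mem_inter_iff, mem_preimage, mem_iUnion, exists_prop, Vf, mem_ofPred_eq]
    constructor
    · rintro ⟨a, b⟩
      exact ⟨_, dom_digit h₁ h₂ b, b, a, rfl⟩
    · rintro ⟨d, _, b, a, _⟩; exact ⟨a, b⟩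
  have u2 : (⋃ d ∈ Finset.Icc (1 : ℤ) 4, S ∩ Wf α d : Set (ℝ × ℝ)) =ᵐ[volume]
      (S ∩ natExtDom α : Set (ℝ × ℝ)) := by
    filter_upwards [gen_ae α] with p g
    have hF : Finset.Icc (1 : ℤ) 4 = {1, 2, 3, 4} := by decide
    have := (gen_key h₁ h₂ g).1
    apply propext
    change p ∈ (⋃ d ∈ Finset.Icc (1 : ℤ) 4, S ∩ Wf α d : Set (ℝ × ℝ)) ↔ p ∈ S ∩ natExtDom α
    rw [hF]
    simp only [mem_iUnion, mem_inter_iff, this, Finset.mem_insert, Finset.mem_singleton, exists_prop]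
    constructor
    · rintro ⟨d, rfl | rfl | rfl | rfl, h, h'⟩ <;> refine ⟨h, ?_⟩ <;> push_cast at h' <;> tauto
    · rintro ⟨h, h' | h' | h' | h'⟩
      · exact ⟨1, by simp, h, by exact_mod_cast h'⟩
      · exact ⟨2, by simp, h, by exact_mod_cast h'⟩
      · exact ⟨3, by simp, h, by exact_mod_cast h'⟩
      · exact ⟨4, by simp, h, by exact_mod_cast h'⟩
  rw [u1, ← Measure.restrict_congr_set u2]
  rw [lintegral_biUnion_finset₀, lintegral_biUnion_finset₀]
  · refine Finset.sum_congr rfl fun d hd => ?_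
    have hd1 := (Finset.mem_Icc.1 hd).1
    rw [← image_V h₁ h₂ S hd1, cov (by exact_mod_cast hd1) (meas_V α hS d)]
    exact fun p hp => dom_pos h₁ h₂ hp.1
  · have hdis : ∀ i ∈ Finset.Icc (1 : ℤ) 4, ∀ j ∈ Finset.Icc (1 : ℤ) 4, i < j →
        AEDisjoint volume (S ∩ Wf α i) (S ∩ Wf α j) := by
      intro i hi j hj hij
      rw [AEDisjoint, measure_eq_zero_iff_ae_notMem]
      filter_upwards [gen_ae α] with p g
      have := (gen_key h₁ h₂ g).2
      rintro ⟨⟨_, a⟩, _, b⟩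
      rw [Finset.mem_Icc] at hi hj
      obtain ⟨i1, i2⟩ := hi
      obtain ⟨j1, j2⟩ := hj
      interval_cases i <;> interval_cases j <;> first | omega | (push_cast at a b; tauto)
    intro i hi j hj hij
    rcases lt_or_gt_of_ne hij with h | h
    · exact hdis i hi j hj h
    · exact (hdis j hj i hi h).symm
  · intro d _; exact (hS.inter (meas_W α d)).nullMeasurableSet
  · intro i hi j hj hij
    apply Disjoint.aedisjoint
    rw [Set.disjoint_left]
    rintro p ⟨_, _, a⟩ ⟨_, _, b⟩
    exact hij (a.symm.trans b)
  · intro d _; exact (meas_V α hS d).nullMeasurableSet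

theorem piece {f : ℝ → ℝ} {a b c : ℝ} (ha : 0 < a) (hab : a ≤ b) (hc : 0 < c)
    (hf : ∀ x ∈ Ioc a b, f x = c) :
    IntervalIntegrable (fun x => f x / (2 + x * f x)) volume a b ∧
    ∫ x in a..b, f x / (2 + x * f x) = Real.log (2 + b * c) - Real.log (2 + a * c) := by
  have hpos : ∀ x ∈ uIcc a b, 0 < 2 + x * c := by
    intro x hx
    rw [uIcc_of_le hab] at hx
    have : 0 < x := ha.trans_le hx.1
    positivity
  have hcont : IntervalIntegrable (fun x => c / (2 + x * c)) volume a b := by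
    apply ContinuousOn.intervalIntegrable
    refine continuousOn_const.div (by fun_prop) fun x hx => (hpos x hx).ne'
  have he : EqOn (fun x => c / (2 + x * c)) (fun x => f x / (2 + x * f x)) (uIoc a b) := by
    intro x hx
    rw [uIoc_of_le hab] at hx
    simp only [hf x hx]
  refine ⟨hcont.congr he, ?_⟩
  rw [← intervalIntegral.integral_congr_ae (Filter.Eventually.of_forall fun x hx => he hx)]
  rw [intervalIntegral.integral_eq_sub_of_hasDerivAt (f := fun x => Real.log (2 + x * c)) _ hcont]
  intro x hx
  have := (((hasDerivAt_id x).mul_const c).const_add 2).log (hpos x hx).ne'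
  simpa using this

theorem lf_int {A B C a p1 p2 b : ℝ} (ha : 0 < a) (h1 : a ≤ p1) (h2 : p1 ≤ p2) (h3 : p2 ≤ b)
    (hA : 0 < A) (hB : 0 < B) (hC : 0 < C) :
    IntervalIntegrable (fun x => lf A B C p1 p2 x / (2 + x * lf A B C p1 p2 x)) volume a b ∧
    ∫ x in a..b, lf A B C p1 p2 x / (2 + x * lf A B C p1 p2 x) =
      (Real.log (2 + p1 * A) - Real.log (2 + a * A)) +
      (Real.log (2 + p2 * B) - Real.log (2 + p1 * B)) +
      (Real.log (2 + b * C) - Real.log (2 + p2 * C)) := by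
  obtain ⟨i1, e1⟩ := piece (f := lf A B C p1 p2) ha h1 hA (fun x hx => by simp [lf, hx.2])
  obtain ⟨i2, e2⟩ := piece (f := lf A B C p1 p2) (ha.trans_le h1) h2 hB
    (fun x hx => by simp [lf, hx.2, not_le.2 hx.1])
  obtain ⟨i3, e3⟩ := piece (f := lf A B C p1 p2) (ha.trans_le (h1.trans h2)) h3 hC
    (fun x hx => by simp [lf, not_le.2 (h2.trans_lt hx.1), not_le.2 hx.1])
  refine ⟨(i1.trans i2).trans i3, ?_⟩
  rw [← intervalIntegral.integral_add_adjacent_intervals (i1.trans i2) i3,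
    ← intervalIntegral.integral_add_adjacent_intervals i1 i2, e1, e2, e3]

theorem inner_int {K x l u : ℝ} (hK : 0 ≤ K) (hx : 0 < x) (hl : 0 < l) (hlu : l ≤ u) :
    ∫⁻ y in Icc l u, ENNReal.ofReal (K * 2 / (2 + x * y) ^ 2) =
      ENNReal.ofReal (K * (u / (2 + x * u) - l / (2 + x * l))) := by
  have hpos : ∀ y ∈ uIcc l u, 0 < 2 + x * y := by
    intro y hy
    rw [uIcc_of_le hlu] at hy
    have : 0 < y := hl.trans_le hy.1
    positivity
  have hcont : ContinuousOn (fun y => K * 2 / (2 + x * y) ^ 2) (uIcc l u) :=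
    continuousOn_const.div (by fun_prop) fun y hy => (pow_pos (hpos y hy) 2).ne'
  have hcont' : ContinuousOn (fun y => K * 2 / (2 + x * y) ^ 2) (Icc l u) := by
    rwa [uIcc_of_le hlu] at hcont
  rw [← ofReal_integral_eq_lintegral_ofReal hcont'.integrableOn_Icc
    (Filter.Eventually.of_forall fun y => by positivity), integral_Icc_eq_integral_Ioc,
    ← intervalIntegral.integral_of_le hlu,
    intervalIntegral.integral_eq_sub_of_hasDerivAt (f := fun y => K * (y / (2 + x * y))) _
      hcont.intervalIntegrable, mul_sub]
  intro y hy
  have h0 := (hpos y hy).ne'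
  have := ((hasDerivAt_id y).div (((hasDerivAt_id y).const_mul x).const_add 2) h0).const_mul K
  convert! this using 1
  simp
  field_simp
  ring

theorem const_id {α : ℝ} (h₁ : (Real.sqrt 33 - 5) / 2 < α) (h₂ : α < Real.sqrt 2 - 1)
    {A B C D E F p1 p2 q1 q2 w : ℝ} (H : Facts α A B C D E F p1 p2 q1 q2 w)
    (hA : A = (Real.sqrt 33 - 5) / 2) (hB : B = Real.sqrt 2 - 1) (hC : C = (Real.sqrt 33 - 3) / 6)
    (hD : D = 2 * Real.sqrt 2 - 2) (hE : E = (Real.sqrt 33 - 3) / 2) (hF : F = Real.sqrt 2)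
    (hp1 : p1 = (6 * α - 2) / (1 - α)) (hp2 : p2 = (2 - 4 * α) / α) (hq1 : q1 = (1 - α) / (1 + α))
    (hq2 : q2 = (3 * α - 1) / (1 - 2 * α)) :
    ((Real.log (2 + q1 * D) - Real.log (2 + α * D)) +
      (Real.log (2 + q2 * E) - Real.log (2 + q1 * E)) +
      (Real.log (2 + (α + 1) * F) - Real.log (2 + q2 * F))) -
    ((Real.log (2 + p1 * A) - Real.log (2 + α * A)) +
      (Real.log (2 + p2 * B) - Real.log (2 + p1 * B)) +
      (Real.log (2 + (α + 1) * C) - Real.log (2 + p2 * C))) =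
    Real.log ((1 / 32) * (3 + 2 * Real.sqrt 2) * (7 + Real.sqrt 33) * (Real.sqrt 33 - 5) ^ 2) := by
  obtain ⟨c1, c2, c3, c4, c5, c6, c7, c8, c9, c10⟩ := alpha_bds α h₁ h₂
  generalize Real.sqrt 33 = s at *
  generalize Real.sqrt 2 = r at *
  have e1 : 0 < α := by linarith
  have e2 : 0 < 1 - α := by linarith
  have e3 : 0 < 1 + α := by linarith
  have e4 : 0 < 1 - 2 * α := by linarith
  have pA := H.hA
  have pB := pA.trans H.hAB
  have pC := pB.trans H.hBC
  have pD := pC.trans H.hCD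
  have pE := pD.trans H.hDE
  have pF := pE.trans H.hEF
  have hP : 0 < 1 + (r - 1) * α := by have : 0 < r - 1 := by linarith
                                      positivity
  have hQ : 0 < 1 + A * α / 2 := by positivity
  obtain ⟨P, rP⟩ : ∃ P, P = 1 + (r - 1) * α := ⟨_, rfl⟩
  obtain ⟨Q, rQ⟩ : ∃ Q, Q = 1 + A * α / 2 := ⟨_, rfl⟩
  rw [← rP] at hP
  rw [← rQ] at hQ
  have f1 : 2 + α * D = 2 * P := by clear H; subst rP hD; ring
  have f2 : 2 + q1 * D = 2 * r * P / (1 + α) := by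
    clear H; subst rP hD hq1; field_simp; clear * - c10; grind
  have f3 : 2 + (α + 1) * F = (2 + r) * P := by
    clear H; subst rP hF; clear * - c10; grind
  have f4 : 2 + p1 * B = 2 * r * B * P / (1 - α) := by
    clear H; subst rP hB hp1; field_simp; clear * - c10; grind
  have f5 : 2 + p2 * B = 2 * B * P / α := by
    clear H; subst rP hB hp2; field_simp; clear * - c10; grind
  have f6 : 2 + q2 * F = r * B * P / (1 - 2 * α) := by
    clear H; subst rP hB hF hq2; field_simp; clear * - c10; grind
  have f7 : 2 + α * A = 2 * Q := by clear H; subst rQ; ring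
  have f8 : 2 + (α + 1) * C = (2 + C) * Q := by
    clear H; subst rQ hA hC; clear * - c9; grind
  have f9 : 2 + q1 * E = E * (2 + C) * Q / (1 + α) := by
    clear H; subst rQ hA hC hE hq1; field_simp; clear * - c9; grind
  have f10 : 2 + p1 * A = A * E * (2 + C) * Q / (1 - α) := by
    clear H; subst rQ hA hC hE hp1; field_simp; clear * - c9; grind
  have f11 : 2 + p2 * C = 2 * C * Q / α := by
    clear H; subst rQ hA hC hp2; field_simp; clear * - c9; grind
  have f12 : 2 + q2 * E = E * C * Q / (1 - 2 * α) := by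
    clear H; subst rQ hA hC hE hq2; field_simp; clear * - c9; grind
  have pC2 : 0 < 2 + C := by linarith
  have pr : 0 < r := by linarith
  have pr2 : 0 < 2 + r := by linarith
  rw [f1, f2, f3, f4, f5, f6, f7, f8, f9, f10, f11, f12]
  rw [← Real.log_div (by positivity) (by positivity), ← Real.log_div (by positivity) (by positivity),
    ← Real.log_div (by positivity) (by positivity), ← Real.log_div (by positivity) (by positivity),
    ← Real.log_div (by positivity) (by positivity), ← Real.log_div (by positivity) (by positivity),
    ← Real.log_mul (by positivity) (by positivity), ← Real.log_mul (by positivity) (by positivity),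
    ← Real.log_mul (by positivity) (by positivity), ← Real.log_mul (by positivity) (by positivity),
    ← Real.log_div (by positivity) (by positivity)]
  congr 1
  have : 2 * r * P / (1 + α) / (2 * P) * (E * C * Q / (1 - 2 * α) / (E * (2 + C) * Q / (1 + α))) *
        ((2 + r) * P / (r * B * P / (1 - 2 * α))) /
      (A * E * (2 + C) * Q / (1 - α) / (2 * Q) * (2 * B * P / α / (2 * r * B * P / (1 - α))) *
        ((2 + C) * Q / (2 * C * Q / α))) =
      4 * C ^ 2 * r * (2 + r) / (B * A * E * (2 + C) ^ 3) := by
    field_simp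
    norm_num
  rw [this, div_eq_iff (by positivity)]
  clear this f1 f2 f3 f4 f5 f6 f7 f8 f9 f10 f11 f12 H rP rQ hp1 hp2 hq1 hq2
  subst hA hB hC hE
  clear * - c9 c10; grind

theorem mass {α K : ℝ} (hK : 0 ≤ K) (h₁ : (Real.sqrt 33 - 5) / 2 < α) (h₂ : α < Real.sqrt 2 - 1) :
    ∫⁻ p in natExtDom α, dens K p = ENNReal.ofReal (K *
      Real.log ((1 / 32) * (3 + 2 * Real.sqrt 2) * (7 + Real.sqrt 33) * (Real.sqrt 33 - 5) ^ 2)) := by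
  have H := facts α h₁ h₂
  have hα := H.hα
  have pA := H.hA
  have pB := pA.trans H.hAB
  have pC := pB.trans H.hBC
  have pD := pC.trans H.hCD
  have pE := pD.trans H.hDE
  have pF := pE.trans H.hEF
  have hlb : ∀ x, 0 < lb α x := fun x => by rw [lb_eq]; exact pA.trans_le (lf_bds H.hAB H.hBC).1
  have hdens : Measurable (dens K) := by unfold dens; fun_prop
  obtain ⟨i1, e1⟩ := lf_int hα H.ap1.le H.p12.le H.p2a.le pA pB pC
  obtain ⟨i2, e2⟩ := lf_int hα H.aq1.le H.q12.le H.q2a.le pD pE pF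
  rw [← lb_eq] at i1 e1
  rw [← ub_eq] at i2 e2
  rw [← const_id h₁ h₂ H rfl rfl rfl rfl rfl rfl rfl rfl rfl rfl, ← e1, ← e2,
    ← intervalIntegral.integral_sub i2 i1, ← intervalIntegral.integral_const_mul,
    intervalIntegral.integral_of_le (by linarith), ← integral_Icc_eq_integral_Ioc,
    ofReal_integral_eq_lintegral_ofReal]
  · rw [← lintegral_indicator (meas_dom α), Measure.volume_eq_prod,
      lintegral_prod _ (hdens.indicator (meas_dom α)).aemeasurable,
      ← lintegral_indicator measurableSet_Icc]
    refine lintegral_congr fun x => ?_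
    by_cases hx : x ∈ Icc α (α + 1)
    · rw [indicator_of_mem hx, ← inner_int hK (hα.trans_le hx.1) (hlb x) (lb_lt_ub h₁ h₂ x x).le,
        ← lintegral_indicator measurableSet_Icc]
      refine lintegral_congr fun y => ?_
      by_cases hy : y ∈ Icc (lb α x) (ub α x)
      · rw [indicator_of_mem hy, indicator_of_mem (show (x, y) ∈ natExtDom α from ⟨hx, hy⟩)]
        rfl
      · rw [indicator_of_notMem hy, indicator_of_notMem (fun h => hy h.2)]
    · rw [indicator_of_notMem hx]
      rw [lintegral_congr (g := fun _ => 0), lintegral_zero]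
      intro y
      exact indicator_of_notMem (fun h => hx h.1) _
  · change IntegrableOn _ _ _
    rw [integrableOn_Icc_iff_integrableOn_Ioc]
    exact ((intervalIntegrable_iff_integrableOn_Ioc_of_le (by linarith)).1 ((i2.sub i1).const_mul K))
  · filter_upwards [ae_restrict_mem measurableSet_Icc] with x hx
    have hx0 := hα.trans_le hx.1
    have h1 := hlb x
    have h2 := lb_lt_ub h₁ h₂ x x
    have h3 : lb α x / (2 + x * lb α x) ≤ ub α x / (2 + x * ub α x) := by
      have := h1.trans h2
      rw [div_le_div_iff₀ (by positivity) (by positivity)]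
      nlinarith
    simp only [Pi.zero_apply]
    exact mul_nonneg hK (by linarith)

theorem log_pos' : 0 < Real.log ((1 / 32) * (3 + 2 * Real.sqrt 2) * (7 + Real.sqrt 33) *
    (Real.sqrt 33 - 5) ^ 2) := by
  apply Real.log_pos
  have b1 : 5.744 < Real.sqrt 33 := Real.lt_sqrt_of_sq_lt (by norm_num)
  have b3 : 1.4142 < Real.sqrt 2 := Real.lt_sqrt_of_sq_lt (by norm_num)
  have h1 : (1 : ℝ) < (1 / 32) * (3 + 2 * 1.4142) * (7 + 5.744) * (5.744 - 5) ^ 2 := by norm_num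
  refine h1.trans ?_
  gcongr

theorem stmt_16 (α : ℝ) (h₁ : (Real.sqrt 33 - 5) / 2 < α) (h₂ : α < Real.sqrt 2 - 1) :
    (∀ᵐ p ∂(volume.restrict (natExtDom α)), natExtMap α p ∈ natExtDom α) ∧
    MeasurePreserving (natExtMap α)
      ((volume.restrict (natExtDom α)).withDensity fun p =>
        ENNReal.ofReal
          ((1 / Real.log ((1 / 32) * (3 + 2 * Real.sqrt 2) * (7 + Real.sqrt 33) *
              (Real.sqrt 33 - 5) ^ 2)) * 2 / (2 + p.1 * p.2) ^ 2))
      ((volume.restrict (natExtDom α)).withDensity fun p =>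
        ENNReal.ofReal
          ((1 / Real.log ((1 / 32) * (3 + 2 * Real.sqrt 2) * (7 + Real.sqrt 33) *
              (Real.sqrt 33 - 5) ^ 2)) * 2 / (2 + p.1 * p.2) ^ 2)) ∧
    IsProbabilityMeasure
      ((volume.restrict (natExtDom α)).withDensity fun p =>
        ENNReal.ofReal
          ((1 / Real.log ((1 / 32) * (3 + 2 * Real.sqrt 2) * (7 + Real.sqrt 33) *
              (Real.sqrt 33 - 5) ^ 2)) * 2 / (2 + p.1 * p.2) ^ 2)) := by
  have hL := log_pos'
  set Λ := Real.log ((1 / 32) * (3 + 2 * Real.sqrt 2) * (7 + Real.sqrt 33) *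
              (Real.sqrt 33 - 5) ^ 2) with hΛ
  have hdens : Measurable (dens (1 / Λ)) := by unfold dens; fun_prop
  have hp := pres (K := 1 / Λ) h₁ h₂
  refine ⟨?_, hp, ?_⟩
  · have h1 : ∀ᵐ p ∂((volume.restrict (natExtDom α)).withDensity (dens (1 / Λ))),
        p ∈ natExtDom α := by
      rw [ae_withDensity_iff hdens]
      filter_upwards [ae_restrict_mem (meas_dom α)] with p hp _ using hp
    have h2 := hp.quasiMeasurePreserving.ae h1
    rw [ae_withDensity_iff hdens] at h2
    filter_upwards [h2, ae_restrict_mem (meas_dom α)] with p h3 h4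
    apply h3
    obtain ⟨hx, hy⟩ := dom_pos h₁ h₂ h4
    rw [dens, Ne, ENNReal.ofReal_eq_zero, not_le]
    positivity
  · refine ⟨?_⟩
    have := mass (K := 1 / Λ) (by positivity) h₁ h₂
    rw [withDensity_apply _ MeasurableSet.univ, Measure.restrict_univ]
    rw [← hΛ, one_div_mul_cancel hL.ne', ENNReal.ofReal_one] at this
    exact this
end
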